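/- Let n ≥ 1, N ∈ ℕ, τ > 0, and let v_1, …, v_N : ℝⁿ → ℝⁿ be Lipschitz maps with Lipschitz constants L_1, …, L_N ≥ 0 respectively. Then the composition Φ_N := (id + τ·v_N) ∘ ⋯ ∘ (id + τ·v_1) is Lipschitz with constant at most exp( √(N·τ) · √( Σ_{l=1}^{N} τ·L_l² ) ). -/

import Mathlib

/-- The discrete flow map `Φ_k = (id + τ v_k) ∘ ⋯ ∘ (id + τ v_1)`. -/
noncomputable def discreteFlow {n : ℕ} (τ : ℝ)
    (v : ℕ → EuclideanSpace ℝ (Fin n) → EuclideanSpace ℝ (Fin n)) :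
    ℕ → EuclideanSpace ℝ (Fin n) → EuclideanSpace ℝ (Fin n)
  | 0 => id
  | (k + 1) => fun x => discreteFlow τ v k x + τ • v (k + 1) (discreteFlow τ v k x)

/-!
Perturbing the identity by `h • f`, with `f` a `K`-Lipschitz map, gives a `(1 + ‖h‖ K)`-Lipschitz
map, and `1 + ‖h‖ K ≤ exp (‖h‖ K)`. Hence the logarithm of the Lipschitz constant of the composition
is at most `∑ ‖h l‖ K l`, which Cauchy–Schwarz with weights `‖h l‖` bounds by
`√(∑ ‖h l‖) √(∑ ‖h l‖ K l ^ 2)`.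
-/

open Finset
open scoped NNReal

theorem sum_mul_le_sqrt_sum_mul_sqrt_sum_mul_sq {ι : Type*} (s : Finset ι) {w : ι → ℝ}
    (hw : ∀ i ∈ s, 0 ≤ w i) (f : ι → ℝ) :
    ∑ i ∈ s, w i * f i ≤ √(∑ i ∈ s, w i) * √(∑ i ∈ s, w i * f i ^ 2) :=
  calc ∑ i ∈ s, w i * f i
      = ∑ i ∈ s, √(w i) * (√(w i) * f i) :=
        sum_congr rfl fun i hi ↦ by rw [← mul_assoc, Real.mul_self_sqrt (hw i hi)]
    _ ≤ √(∑ i ∈ s, √(w i) ^ 2) * √(∑ i ∈ s, (√(w i) * f i) ^ 2) :=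
        Real.sum_mul_le_sqrt_mul_sqrt s _ _
    _ = √(∑ i ∈ s, w i) * √(∑ i ∈ s, w i * f i ^ 2) := by
        congr 2 <;> exact sum_congr rfl fun i hi ↦ by simp only [mul_pow, Real.sq_sqrt (hw i hi)]

/-- The flow map of the explicit Euler scheme with steps `h l` and vector fields `v l`, that is
`(id + h N • v N) ∘ ⋯ ∘ (id + h 1 • v 1)`. As in `discreteFlow`, the values `h 0` and `v 0` do not
enter. -/
def eulerFlow {𝕜 E : Type*} [Add E] [SMul 𝕜 E] (h : ℕ → 𝕜) (v : ℕ → E → E) : ℕ → E → E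
  | 0 => id
  | k + 1 => fun x ↦ eulerFlow h v k x + h (k + 1) • v (k + 1) (eulerFlow h v k x)

theorem discreteFlow_eq_eulerFlow {n : ℕ} (τ : ℝ)
    (v : ℕ → EuclideanSpace ℝ (Fin n) → EuclideanSpace ℝ (Fin n)) (N : ℕ) :
    discreteFlow τ v N = eulerFlow (fun _ ↦ τ) v N := by
  induction N with
  | zero => rfl
  | succ k ih => simp only [discreteFlow, eulerFlow, ih]

section Lipschitz

variable {𝕜 E : Type*} [SeminormedRing 𝕜] [SeminormedAddCommGroup E] [Module 𝕜 E]
  [IsBoundedSMul 𝕜 E]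

theorem lipschitzWith_id_add_smul {K : ℝ≥0} {f : E → E} (hf : LipschitzWith K f) (c : 𝕜) :
    LipschitzWith (1 + ‖c‖₊ * K) fun x ↦ x + c • f x :=
  LipschitzWith.id.add ((lipschitzWith_smul c).comp hf)

variable {h : ℕ → 𝕜} {v : ℕ → E → E} {K : ℕ → ℝ≥0} {N : ℕ}

theorem lipschitzWith_eulerFlow_prod (hv : ∀ l ∈ Icc 1 N, LipschitzWith (K l) (v l)) :
    LipschitzWith (∏ l ∈ Icc 1 N, (1 + ‖h l‖₊ * K l)) (eulerFlow h v N) := by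
  induction N with
  | zero => exact LipschitzWith.id
  | succ k ih =>
    have hflow := ih fun l hl ↦ hv l (Icc_subset_Icc_right k.le_succ hl)
    have hstep := lipschitzWith_id_add_smul (hv (k + 1) (by simp)) (h (k + 1))
    rw [prod_Icc_succ_top (by lia), mul_comm]
    exact hstep.comp hflow

theorem lipschitzWith_eulerFlow_exp (hv : ∀ l ∈ Icc 1 N, LipschitzWith (K l) (v l)) :
    LipschitzWith
      (Real.exp (√(∑ l ∈ Icc 1 N, ‖h l‖) * √(∑ l ∈ Icc 1 N, ‖h l‖ * K l ^ 2))).toNNReal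
      (eulerFlow h v N) := by
  refine (lipschitzWith_eulerFlow_prod hv).weaken (NNReal.le_toNNReal_of_coe_le ?_)
  push_cast
  calc ∏ l ∈ Icc 1 N, (1 + ‖h l‖ * K l)
      ≤ Real.exp (∑ l ∈ Icc 1 N, ‖h l‖ * K l) :=
        Real.prod_one_add_le_exp_sum _ fun l ↦ by positivity
    _ ≤ Real.exp (√(∑ l ∈ Icc 1 N, ‖h l‖) * √(∑ l ∈ Icc 1 N, ‖h l‖ * K l ^ 2)) :=
        Real.exp_le_exp.2 <|
          sum_mul_le_sqrt_sum_mul_sqrt_sum_mul_sq _ (fun l _ ↦ norm_nonneg (h l)) _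

theorem discreteFlow_lipschitz_general {L : ℕ → ℝ}
    (hL : ∀ l ∈ Icc 1 N, ∀ x y, ‖v l x - v l y‖ ≤ L l * ‖x - y‖) (x y : E) :
    ‖eulerFlow h v N x - eulerFlow h v N y‖ ≤
      Real.exp (√(∑ l ∈ Icc 1 N, ‖h l‖) * √(∑ l ∈ Icc 1 N, ‖h l‖ * L l ^ 2)) * ‖x - y‖ := by
  have hv : ∀ l ∈ Icc 1 N, LipschitzWith ‖L l‖₊ (v l) := fun l hl ↦ .of_dist_le_mul fun x y ↦ by
    rw [dist_eq_norm, dist_eq_norm]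
    exact (hL l hl x y).trans (by gcongr; exact Real.le_norm_self _)
  have hdist := (lipschitzWith_eulerFlow_exp (h := h) hv).dist_le_mul x y
  simpa only [dist_eq_norm, Real.coe_toNNReal _ (Real.exp_nonneg _), coe_nnnorm, Real.norm_eq_abs,
    sq_abs] using hdist

end Lipschitz

/-- **Uniform Lipschitz bound on the discrete flow map** (paper, Section 4.1):
if each `v_l` is `L_l`-Lipschitz, then `Φ_N = (id + τ v_N) ∘ ⋯ ∘ (id + τ v_1)` is
Lipschitz with constant at most `exp(√(Nτ)·√(∑_{l=1}^N τ L_l²))`. -/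
theorem discreteFlow_lipschitz (n : ℕ) (hn : 1 ≤ n) (N : ℕ) (τ : ℝ) (hτ : 0 < τ)
    (v : ℕ → EuclideanSpace ℝ (Fin n) → EuclideanSpace ℝ (Fin n)) (L : ℕ → ℝ)
    (hL : ∀ l, 1 ≤ l → l ≤ N → 0 ≤ L l ∧ ∀ x y, ‖v l x - v l y‖ ≤ L l * ‖x - y‖) :
    ∀ x y, ‖discreteFlow τ v N x - discreteFlow τ v N y‖ ≤
      Real.exp (Real.sqrt ((N : ℝ) * τ) *
        Real.sqrt (∑ l ∈ Finset.Icc 1 N, τ * L l ^ 2)) * ‖x - y‖ := by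
  simpa [discreteFlow_eq_eulerFlow, abs_of_pos hτ] using discreteFlow_lipschitz_general
    (h := fun _ ↦ τ) fun l hl ↦ (hL l (mem_Icc.1 hl).1 (mem_Icc.1 hl).2).2
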